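/- The sequence ℓ_n³·(a_n·ζ(3) − b_n) tends to 0 as n tends to infinity. -/

import Mathlib

/-- `lcmUpTo n` is `lcm(1, 2, ..., n)` (and `1` for `n = 0`). -/
def lcmUpTo (n : ℕ) : ℕ := (Finset.Icc 1 n).lcm id

/-- ζ(3), the sum of the series ∑_{m=1}^∞ 1/m³. -/
noncomputable def zeta3 : ℝ := ∑' m : ℕ, 1 / ((m : ℝ) + 1) ^ 3

/-- `z n = ∑_{m=1}^n 1/m³`. -/
noncomputable def zseq (n : ℕ) : ℝ := ∑ m ∈ Finset.Icc 1 n, 1 / (m : ℝ) ^ 3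

/-- `a n = ∑_{k=0}^n C(n,k)² C(n+k,k)²`. -/
noncomputable def aseq (n : ℕ) : ℝ :=
  ∑ k ∈ Finset.range (n + 1), (n.choose k : ℝ) ^ 2 * ((n + k).choose k : ℝ) ^ 2

/-- `b n = a n * z n + ∑_{k=1}^n ∑_{m=1}^k (-1)^{m+1} C(n,k)² C(n+k,k)²
      / (2 m³ C(n,m) C(n+m,m))`. -/
noncomputable def bseq (n : ℕ) : ℝ :=
  aseq n * zseq n +
    ∑ k ∈ Finset.Icc 1 n, ∑ m ∈ Finset.Icc 1 k,
      (-1 : ℝ) ^ (m + 1) * (n.choose k : ℝ) ^ 2 * ((n + k).choose k : ℝ) ^ 2 /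
        (2 * (m : ℝ) ^ 3 * (n.choose m : ℝ) * ((n + m).choose m : ℝ))

/-!
Apéry's proof. Both `aseq` and `bseq` satisfy the recurrence `aperyOp u = 0`, so their Casoratian
`a_n b_{n+1} - a_{n+1} b_n` equals `6 / (n+1)³`. Hence `b_n / a_n` is increasing, with limit `ζ(3)`
because it is an average of approximations `c_{n,k}` of `ζ(3)`, and summing the increments gives
`0 ≤ a_n ζ(3) - b_n ≤ 6 ζ(3) / a_n`. The recurrence makes `a_n` grow at least like `32ⁿ`.

It remains to bound `ℓ_n³` by a smaller exponential. Since `1/2 + 1/3 + 1/7 + 1/42 = 1`, the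
multinomial coefficient `(42m)! / ((21m)! (14m)! (6m)! m!)` has each prime `p` to an exponent at
least the number of powers of `p` in `(m, 42m]`, so `ℓ_{42m} / ℓ_m` divides it. Its size, bounded by
the multinomial theorem, gives `ℓ_n = O((22/7)ⁿ)` by iteration, and `(22/7)³ < 32`.
-/

section Chebyshev

open Chebyshev Finset
open ArithmeticFunction hiding log
open scoped ArithmeticFunction.zeta Nat

theorem log_factorial_eq_sum_vonMangoldt {n N : ℕ} (h : n ≤ N) :
    Real.log (n !) = ∑ d ∈ Ioc 0 N, Λ d * ((n / d : ℕ) : ℝ) := by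
  have log_eq_sum : Real.log (n !) = ∑ i ∈ Ioc 0 n, Real.log i := by
    rw [← prod_Ico_id_eq_factorial, Nat.cast_prod, Real.log_prod fun i hi ↦ ?_]
    · rfl
    · have := (mem_Ico.1 hi).1
      positivity
  calc Real.log (n !) = ∑ i ∈ Ioc 0 n, (Λ * ζ) i := by rw [log_eq_sum, vonMangoldt_mul_zeta]; rfl
    _ = ∑ d ∈ Ioc 0 n, Λ d * ((n / d : ℕ) : ℝ) := sum_Ioc_mul_zeta_eq_sum Λ n
    _ = ∑ d ∈ Ioc 0 N, Λ d * ((n / d : ℕ) : ℝ) := by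
      refine sum_subset (Ioc_subset_Ioc_right h) fun d hd hd' ↦ ?_
      have : n < d := by grind
      simp [Nat.div_eq_of_lt this]

theorem multinomial_mul_prod_pow_le_sum_pow {α R : Type*} [Fintype α] [CommSemiring R]
    [PartialOrder R] [IsOrderedRing R] (k : α → ℕ) {x : α → R} (hx : ∀ i, 0 ≤ x i) :
    (Nat.multinomial univ k : R) * ∏ i, x i ^ k i ≤ (∑ i, x i) ^ ∑ i, k i := by
  classical
  rw [sum_pow_eq_sum_piAntidiag]
  exact single_le_sum (f := fun k ↦ (Nat.multinomial univ k : R) * ∏ i, x i ^ k i)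
    (fun l _ ↦ mul_nonneg (Nat.cast_nonneg _) (prod_nonneg fun i _ ↦ pow_nonneg (hx i) _))
    (by simp)

theorem log_multinomial_mul_le {α : Type*} [Fintype α] (m : ℕ) (x : α → ℕ) :
    Real.log (Nat.multinomial univ fun i ↦ m * x i) ≤
      m * ((∑ i, x i : ℕ) * Real.log (∑ i, x i : ℕ) - ∑ i, x i * Real.log (x i)) := by
  have hmul := multinomial_mul_prod_pow_le_sum_pow (fun i ↦ m * x i) (x := fun i ↦ (x i : ℝ))
    fun i ↦ by positivity
  have hpow (i : α) : (0 : ℝ) < (x i : ℝ) ^ (m * x i) := by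
    rw [pow_mul']
    exact pow_pos (by exact_mod_cast Nat.pow_self_pos) m
  have hmult : 0 < (Nat.multinomial univ fun i ↦ m * x i : ℝ) := by
    exact_mod_cast Nat.multinomial_pos ..
  have hlog := Real.log_le_log (mul_pos hmult (prod_pos fun i _ ↦ hpow i)) hmul
  rw [Real.log_mul hmult.ne' (prod_pos fun i _ ↦ hpow i).ne',
    Real.log_prod fun i _ ↦ (hpow i).ne', Real.log_pow] at hlog
  simp only [Real.log_pow, ← mul_sum, Nat.cast_mul, mul_assoc] at hlog
  push_cast at hlog ⊢
  linarith

theorem log_factorial_42_mul (m : ℕ) :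
    Real.log ((42 * m)!) = Real.log ((21 * m)!) + Real.log ((14 * m)!) + Real.log ((6 * m)!)
      + Real.log (m !) + Real.log (Nat.multinomial univ fun i ↦ m * ![21, 14, 6, 1] i) := by
  set M := Nat.multinomial univ fun i ↦ m * ![21, 14, 6, 1] i with hM
  have spec : (21 * m)! * (14 * m)! * (6 * m)! * m ! * M = (42 * m)! := by
    have := Nat.multinomial_spec univ fun i ↦ m * ![21, 14, 6, 1] i
    rw [← mul_sum, ← hM] at this
    simpa [Fin.prod_univ_four, Fin.sum_univ_four, mul_comm m] using this
  have hM_ne : (M : ℝ) ≠ 0 := by exact_mod_cast (Nat.multinomial_pos ..).ne'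
  rw [← spec]
  push_cast
  rw [Real.log_mul (by positivity) hM_ne, Real.log_mul (by positivity) (by positivity),
    Real.log_mul (by positivity) (by positivity), Real.log_mul (by positivity) (by positivity)]

-- With `q = 42m/d`, this is `⌊q⌋ - ⌊q/2⌋ - ⌊q/3⌋ - ⌊q/7⌋ - ⌊q/42⌋ ≥ 0`, strictly if `1 ≤ q < 42`,
-- which holds since `1/2 + 1/3 + 1/7 + 1/42 = 1`.
theorem one_add_div_add_div_le {d m : ℕ} (hd : 0 < d) (hdm : d ≤ 42 * m) :
    1 + 21 * m / d + 14 * m / d + 6 * m / d + m / d ≤ 42 * m / d + if d ≤ m then 1 else 0 := by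
  have div_eq : ∀ {c e : ℕ}, c * e = 42 → c * m / d = 42 * m / d / e := fun {c e} h ↦ by
    have he : 0 < e := by lia
    rw [Nat.div_div_eq_div_mul, ← h, mul_right_comm, Nat.mul_div_mul_right _ _ he]
  have h₁ : m / d = 42 * m / d / 42 := by simpa using div_eq (one_mul 42)
  have h_pos : 1 ≤ 42 * m / d := (Nat.one_le_div_iff hd).2 hdm
  have h_iff : d ≤ m ↔ 42 ≤ 42 * m / d := by
    rw [Nat.le_div_iff_mul_le hd]
    lia
  rw [div_eq (show 21 * 2 = 42 by rfl), div_eq (show 14 * 3 = 42 by rfl),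
    div_eq (show 6 * 7 = 42 by rfl), h₁]
  simp only [h_iff]
  split_ifs <;> lia

theorem psi_mul_le_psi_add_log_multinomial (m : ℕ) :
    ψ (42 * m : ℕ) ≤
      ψ m + Real.log (Nat.multinomial univ fun i ↦ m * ![21, 14, 6, 1] i) := by
  have psi_eq : ψ m = ∑ d ∈ Ioc 0 (42 * m), Λ d * (if d ≤ m then 1 else 0) := by
    simp only [psi, Nat.floor_natCast, mul_ite, mul_one, mul_zero, ← sum_filter]
    congr 1
    ext d
    grind
  have log_fact {c : ℕ} (hc : c * m ≤ 42 * m) := log_factorial_eq_sum_vonMangoldt hc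
  suffices ψ (42 * m : ℕ) + Real.log ((21 * m)!) + Real.log ((14 * m)!) + Real.log ((6 * m)!)
      + Real.log (m !) ≤ Real.log ((42 * m)!) + ψ m by
    linarith [log_factorial_42_mul m]
  rw [psi_eq, log_fact le_rfl, log_fact (c := 21) (by lia), log_fact (c := 14) (by lia),
    log_fact (c := 6) (by lia), log_factorial_eq_sum_vonMangoldt (show m ≤ 42 * m by lia), psi,
    Nat.floor_natCast]
  simp only [← sum_add_distrib]
  refine sum_le_sum fun d hd ↦ ?_
  have h_div : 1 + ((21 * m / d : ℕ) : ℝ) + (14 * m / d : ℕ) + (6 * m / d : ℕ) + (m / d : ℕ)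
      ≤ (42 * m / d : ℕ) + if d ≤ m then 1 else 0 := by
    exact_mod_cast one_add_div_add_div_le (mem_Ioc.1 hd).1 (mem_Ioc.1 hd).2
  linear_combination mul_le_mul_of_nonneg_left h_div (vonMangoldt_nonneg (n := d))

theorem exists_le_mul_add_of_mul_le {f : ℕ → ℝ} (hf : Monotone f) {b : ℕ} (hb : 2 ≤ b) {C K : ℝ}
    (h_le : ∀ m : ℕ, f (b * m) ≤ f m + C * m) (hK : 0 ≤ K) (hCK : C < (b - 1) * K) :
    ∃ D, ∀ n : ℕ, f n ≤ K * n + D := by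
  obtain ⟨N, hN⟩ := exists_nat_ge (b * K / ((b - 1) * K - C))
  rw [div_le_iff₀ (sub_pos.2 hCK)] at hN
  refine ⟨f (b * (N + 2)), fun n ↦ ?_⟩
  induction n using Nat.strong_induction_on with | _ n ih
  rcases le_or_gt n (b * (N + 2)) with hn | hn
  · exact (hf hn).trans (le_add_of_nonneg_left (by positivity))
  obtain ⟨m, hnm, hmn⟩ : ∃ m, n ≤ b * m ∧ b * m ≤ n + b :=
    ⟨n / b + 1, by have := Nat.div_add_mod n b; have := Nat.mod_lt n (by lia : b > 0); lia,
      by have := Nat.div_mul_le_self n b; lia⟩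
  have hNm : N + 2 < m := lt_of_mul_lt_mul_left (hn.trans_le hnm) b.zero_le
  have hm_lt : m < n := by nlinarith
  have hmn' : (b : ℝ) * m ≤ n + b := by exact_mod_cast hmn
  calc f n ≤ f (b * m) := hf hnm
    _ ≤ f m + C * m := h_le m
    _ ≤ K * m + f (b * (N + 2)) + C * m := by gcongr; exact ih m hm_lt
    _ ≤ K * (b * m - b) + f (b * (N + 2)) := by
      have : N * ((b - 1) * K - C) ≤ m * ((b - 1) * K - C) := by
        gcongr
        lia
      linarith
    _ ≤ K * n + f (b * (N + 2)) := by gcongr; linarith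

theorem exists_psi_le : ∃ D, ∀ n : ℕ, ψ n ≤ Real.log (22 / 7) * n + D := by
  set C : ℝ := 42 * Real.log 42 - (21 * Real.log 21 + 14 * Real.log 14 + 6 * Real.log 6)
  have h_le (m : ℕ) : ψ (42 * m : ℕ) ≤ ψ m + C * m := by
    have h := log_multinomial_mul_le m ![21, 14, 6, 1]
    simp only [Nat.succ_eq_add_one, Nat.reduceAdd, Fin.sum_univ_four, Fin.isValue,
      Matrix.cons_val_zero, Matrix.cons_val_one, Matrix.cons_val, Nat.cast_ofNat, Nat.cast_one,
      Real.log_one, mul_zero, add_zero] at h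
    linarith [psi_mul_le_psi_add_log_multinomial m]
  have hC_lt : C < ((42 : ℕ) - 1) * Real.log (22 / 7) := by
    have h : Real.log (42 ^ 42) <
        Real.log ((22 / 7) ^ 41 * 21 ^ 21 * 14 ^ 14 * 6 ^ 6) :=
      Real.log_lt_log (by norm_num) (by norm_num)
    rw [Real.log_mul (by norm_num) (by norm_num), Real.log_mul (by norm_num) (by norm_num),
      Real.log_mul (by norm_num) (by norm_num)] at h
    simp only [Real.log_pow] at h
    push_cast at h ⊢
    linarith
  exact exists_le_mul_add_of_mul_le (f := fun n ↦ ψ n) (fun _ _ h ↦ psi_mono (by exact_mod_cast h))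
    (by norm_num) h_le (Real.log_nonneg (by norm_num)) hC_lt

theorem exists_lcmUpTo_le : ∃ D > 0, ∀ n, (lcmUpTo n : ℝ) ≤ D * (22 / 7) ^ n := by
  obtain ⟨D, hD⟩ := exists_psi_le
  refine ⟨Real.exp D, Real.exp_pos D, fun n ↦ ?_⟩
  have hpos : (0 : ℝ) < lcmUpTo n := by exact_mod_cast n.lcmUpto_pos
  calc (lcmUpTo n : ℝ) = Real.exp (ψ n) := by
        rw [psi_eq_log_lcmUpto]
        exact (Real.exp_log hpos).symm
    _ ≤ Real.exp (Real.log (22 / 7) * n + D) := Real.exp_le_exp.2 (hD n)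
    _ = Real.exp D * (22 / 7) ^ n := by
      rw [Real.exp_add, mul_comm (Real.log _), Real.exp_nat_mul, Real.exp_log (by norm_num),
        mul_comm]

end Chebyshev

section Recurrence

open Finset

/-- The products `C(n,k) C(n+k,k)`, whose squares are the summands of `aseq n`. -/
noncomputable def aperyTerm (n k : ℕ) : ℝ := n.choose k * (n + k).choose k

/-- Apéry's rational approximations `c_{n,k}` of `ζ(3)`, of which `bseq n / aseq n` is the average
over `k ≤ n` with weights `aperyTerm n k ^ 2`. Only the values with `k ≤ n` are meaningful, since
`aperyTerm n m = 0` for `n < m`. -/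
noncomputable def aperyApprox (n k : ℕ) : ℝ :=
  zseq n + ∑ m ∈ Icc 1 k, (-1) ^ (m + 1) / (2 * (m : ℝ) ^ 3 * aperyTerm n m)

theorem aperyTerm_pos {n k : ℕ} (h : k ≤ n) : 0 < aperyTerm n k := by
  have h₁ := Nat.choose_pos h
  have h₂ := Nat.choose_pos (Nat.le_add_left k n)
  unfold aperyTerm
  positivity

theorem aperyTerm_eq_zero_of_lt {n k : ℕ} (h : n < k) : aperyTerm n k = 0 := by
  simp [aperyTerm, Nat.choose_eq_zero_of_lt h]

theorem aperyTerm_zero_right (n : ℕ) : aperyTerm n 0 = 1 := by simp [aperyTerm]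

theorem add_one_le_aperyTerm {n k : ℕ} (hk : 1 ≤ k) (hkn : k ≤ n) :
    (n : ℝ) + 1 ≤ aperyTerm n k := by
  have h₁ : 1 ≤ n.choose k := Nat.choose_pos hkn
  have h₂ : n + 1 ≤ (n + k).choose k := by
    calc n + 1 = (n + 1).choose n := (Nat.choose_succ_self_right n).symm
      _ ≤ (n + k).choose n := Nat.choose_le_choose n (by lia)
      _ = (n + k).choose k := Nat.choose_symm_add
  unfold aperyTerm
  exact_mod_cast h₂.trans (Nat.le_mul_of_pos_left _ h₁)

theorem aperyTerm_succ_left (n k : ℕ) :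
    aperyTerm (n + 1) k * ((n : ℝ) + 1 - k) = aperyTerm n k * ((n : ℝ) + 1 + k) := by
  rcases le_or_gt k (n + 1) with hk | hk
  · have h₁ : (n.choose k : ℝ) * (n + 1) = (n + 1).choose k * ((n : ℝ) + 1 - k) := by
      have := Nat.choose_mul_succ_eq n k
      rify [hk] at this
      exact this
    have h₂ : ((n + k).choose k : ℝ) * (n + k + 1) = (n + 1 + k).choose k * (n + 1) := by
      have := Nat.choose_mul_succ_eq (n + k) k
      rw [show n + k + 1 - k = n + 1 by lia, show n + k + 1 = n + 1 + k by lia] at this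
      rify at this
      linear_combination this
    unfold aperyTerm
    refine mul_right_cancel₀ (Nat.cast_add_one_ne_zero n) ?_
    linear_combination
      -((n + 1 + k).choose k : ℝ) * (n + 1) * h₁ - (n.choose k : ℝ) * (n + 1) * h₂
  · simp [aperyTerm_eq_zero_of_lt hk, aperyTerm_eq_zero_of_lt (n.lt_succ_self.trans hk)]

theorem aperyTerm_succ_right (n k : ℕ) :
    aperyTerm n (k + 1) * ((k : ℝ) + 1) ^ 2 = aperyTerm n k * ((n : ℝ) - k) * (n + k + 1) := by
  rcases le_or_gt k n with hk | hk
  · have h₁ : (n.choose (k + 1) : ℝ) * (k + 1) = n.choose k * ((n : ℝ) - k) := by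
      have := Nat.choose_succ_right_eq n k
      rify [hk] at this
      exact this
    have h₂ : ((n : ℝ) + k + 1) * (n + k).choose k = (n + (k + 1)).choose (k + 1) * (k + 1) := by
      exact_mod_cast Nat.add_one_mul_choose_eq (n + k) k
    unfold aperyTerm
    linear_combination
      ((n + (k + 1)).choose (k + 1) : ℝ) * (k + 1) * h₁ - (n.choose k : ℝ) * ((n : ℝ) - k) * h₂
  · simp [aperyTerm_eq_zero_of_lt hk, aperyTerm_eq_zero_of_lt (hk.trans k.lt_succ_self)]

theorem zseq_succ (n : ℕ) : zseq (n + 1) = zseq n + 1 / ((n : ℝ) + 1) ^ 3 := by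
  simp [zseq, sum_Icc_succ_top]

theorem aperyApprox_zero_right (n : ℕ) : aperyApprox n 0 = zseq n := by simp [aperyApprox]

theorem aperyApprox_succ_right (n k : ℕ) :
    aperyApprox n (k + 1) =
      aperyApprox n k + (-1) ^ k / (2 * ((k : ℝ) + 1) ^ 3 * aperyTerm n (k + 1)) := by
  simp [aperyApprox, sum_Icc_succ_top, add_assoc, pow_succ]

theorem aperyApprox_succ_left {n k : ℕ} (h : k ≤ n) :
    aperyApprox (n + 1) k =
      aperyApprox n k + (-1) ^ k / (((n : ℝ) + 1) ^ 2 * (n + 1 + k) * aperyTerm n k) := by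
  induction k with
  | zero =>
    simp only [aperyApprox_zero_right, zseq_succ, aperyTerm_zero_right, Nat.cast_zero]
    field_simp
    ring
  | succ k ih =>
    have hpos := aperyTerm_pos h
    have hkn : (0 : ℝ) < n - k := by
      have : (k : ℝ) + 1 ≤ n := by exact_mod_cast h
      linarith
    have hleft : aperyTerm (n + 1) (k + 1)
        = aperyTerm n (k + 1) * ((n : ℝ) + k + 2) / (n - k) := by
      rw [eq_div_iff hkn.ne']
      have := aperyTerm_succ_left n (k + 1)
      push_cast at this
      linear_combination this
    have hright : aperyTerm n k
        = aperyTerm n (k + 1) * ((k : ℝ) + 1) ^ 2 / ((n - k) * (n + k + 1)) := by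
      rw [eq_div_iff (by positivity)]
      linear_combination -aperyTerm_succ_right n k
    rw [aperyApprox_succ_right, aperyApprox_succ_right, ih (by lia), hleft, hright]
    push_cast
    field_simp
    ring

theorem aperyTerm_sq_mul_aperyApprox_succ_left (n k : ℕ) :
    aperyTerm n k ^ 2 * aperyApprox (n + 1) k =
      aperyTerm n k ^ 2 * aperyApprox n k +
        (-1) ^ k * aperyTerm n k / (((n : ℝ) + 1) ^ 2 * (n + 1 + k)) := by
  rcases le_or_gt k n with hk | hk
  · have := (aperyTerm_pos hk).ne'
    rw [aperyApprox_succ_left hk]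
    field_simp
  · simp [aperyTerm_eq_zero_of_lt hk]

/-- The Apéry recurrence operator
`(n+2)³ u_{n+2} - (34 (n+1)³ + 51 (n+1)² + 27 (n+1) + 5) u_{n+1} + (n+1)³ u_n`. -/
noncomputable def aperyOp (u : ℕ → ℝ) (n : ℕ) : ℝ :=
  ((n : ℝ) + 2) ^ 3 * u (n + 2)
    - (34 * ((n : ℝ) + 1) ^ 3 + 51 * ((n : ℝ) + 1) ^ 2 + 27 * ((n : ℝ) + 1) + 5) * u (n + 1)
    + ((n : ℝ) + 1) ^ 3 * u n

/-- The certificate found by Zeilberger's algorithm for the summand of `aseq`: the differences in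
`k` of `aperyCertA (n + 1) k` are the images of `aperyTerm n k ^ 2` under `aperyOp`. -/
noncomputable def aperyCertA (n k : ℕ) : ℝ :=
  4 * (2 * (n : ℝ) + 1) * (k * (2 * k + 1) - (2 * n + 1) ^ 2) * aperyTerm n k ^ 2

/-- The analogue of `aperyCertA` for the summand `aperyTerm n k ^ 2 * aperyApprox n k` of `bseq`;
the last term corrects for the dependence of `aperyApprox n k` on `n` and `k`. It divides by `n`, so
only `1 ≤ n` is meaningful. -/
noncomputable def aperyCertB (n k : ℕ) : ℝ :=
  4 * (2 * (n : ℝ) + 1) * (k * (2 * k + 1) - (2 * n + 1) ^ 2)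
      * (aperyTerm n k ^ 2 * aperyApprox n k)
    - 5 * (2 * (n : ℝ) + 1) * (-1) ^ k * k / (n * (n + 1)) * aperyTerm n k

theorem aperyTerm_eq_succ_left (n k : ℕ) :
    aperyTerm n k = aperyTerm (n + 1) k * ((n : ℝ) + 1 - k) / (n + 1 + k) := by
  rw [eq_div_iff (by positivity), aperyTerm_succ_left]

theorem aperyTerm_eq_succ_succ (n k : ℕ) :
    aperyTerm n k =
      aperyTerm (n + 1) (k + 1) * ((k : ℝ) + 1) ^ 2 / ((n + 1 + k) * (n + 2 + k)) := by
  rw [eq_div_iff (by positivity)]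
  have hright := aperyTerm_succ_right (n + 1) k
  push_cast at hright
  linear_combination -((n : ℝ) + k + 2) * aperyTerm_succ_left n k - hright

theorem aperyOp_aperyTerm_sq (n k : ℕ) :
    aperyOp (fun m ↦ aperyTerm m (k + 1) ^ 2) n =
      aperyCertA (n + 1) (k + 1) - aperyCertA (n + 1) k := by
  simp only [aperyOp, aperyCertA, aperyTerm_eq_succ_left n, aperyTerm_eq_succ_left (n + 1) (k + 1),
    aperyTerm_eq_succ_succ (n + 1)]
  push_cast
  field_simp
  ring

theorem aperyOp_aperyTerm_sq_mul_aperyApprox {n k : ℕ} (h : k ≤ n + 1) :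
    aperyOp (fun m ↦ aperyTerm m (k + 1) ^ 2 * aperyApprox m (k + 1)) n =
      aperyCertB (n + 1) (k + 1) - aperyCertB (n + 1) k := by
  have hpos : 0 < aperyTerm (n + 2) (k + 1) := aperyTerm_pos (by lia)
  have happrox : aperyApprox (n + 2) k = aperyApprox (n + 2) (k + 1)
      - (-1) ^ k / (2 * ((k : ℝ) + 1) ^ 3 * aperyTerm (n + 2) (k + 1)) := by
    linear_combination -aperyApprox_succ_right (n + 2) k
  have h₁ : aperyTerm (n + 1) (k + 1) ^ 2 * aperyApprox (n + 1) (k + 1)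
      = aperyTerm (n + 1) (k + 1) ^ 2 * aperyApprox (n + 2) (k + 1)
        + (-1) ^ k * aperyTerm (n + 1) (k + 1) / (((n : ℝ) + 2) ^ 2 * (n + 3 + k)) := by
    rw [aperyTerm_sq_mul_aperyApprox_succ_left]
    push_cast
    ring
  have h₀ : aperyTerm n (k + 1) ^ 2 * aperyApprox n (k + 1)
      = (((n : ℝ) - k) / (n + 2 + k)) ^ 2
          * (aperyTerm (n + 1) (k + 1) ^ 2 * aperyApprox (n + 1) (k + 1))
        + (-1) ^ k * aperyTerm n (k + 1) / (((n : ℝ) + 1) ^ 2 * (n + 2 + k)) := by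
    rw [eq_sub_of_add_eq (aperyTerm_sq_mul_aperyApprox_succ_left n (k + 1)).symm,
      aperyTerm_eq_succ_left n]
    push_cast
    ring
  have h₂ := eq_sub_of_add_eq (aperyTerm_sq_mul_aperyApprox_succ_left (n + 1) k).symm
  simp only [aperyOp, aperyCertB]
  rw [h₀, h₁, h₂, happrox, aperyTerm_eq_succ_left n, aperyTerm_eq_succ_left (n + 1) (k + 1),
    aperyTerm_eq_succ_succ (n + 1)]
  push_cast
  field_simp
  ring

theorem aperyOp_sum (u : ℕ → ℕ → ℝ) (s : Finset ℕ) (n : ℕ) :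
    aperyOp (fun m ↦ ∑ k ∈ s, u m k) n = ∑ k ∈ s, aperyOp (fun m ↦ u m k) n := by
  simp only [aperyOp, mul_sum, sum_add_distrib, sum_sub_distrib]

theorem aperyOp_eq_zero_of_telescoping {u : ℕ → ℕ → ℝ} {v : ℕ → ℝ} {n : ℕ}
    (hu : ∀ m k, m < k → u m k = 0) (h_zero : aperyOp (fun m ↦ u m 0) n = v 0)
    (h_succ : ∀ k ≤ n + 1, aperyOp (fun m ↦ u m (k + 1)) n = v (k + 1) - v k)
    (h_last : v (n + 2) = 0) :
    aperyOp (fun m ↦ ∑ k ∈ range (m + 1), u m k) n = 0 := by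
  have extend : ∀ m ≤ n + 2, ∑ k ∈ range (m + 1), u m k = ∑ k ∈ range (n + 3), u m k := fun m hm ↦
    sum_subset (range_mono (by lia)) fun k _ hk ↦ hu m k (by grind)
  calc aperyOp (fun m ↦ ∑ k ∈ range (m + 1), u m k) n
      = aperyOp (fun m ↦ ∑ k ∈ range (n + 3), u m k) n := by
        simp only [aperyOp, extend n (by lia), extend (n + 1) (by lia), extend (n + 2) le_rfl]
    _ = ∑ k ∈ range (n + 2), (v (k + 1) - v k) + v 0 := by
        rw [aperyOp_sum, sum_range_succ', h_zero]
        congr 1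
        exact sum_congr rfl fun k hk ↦ h_succ k (by grind)
    _ = 0 := by rw [sum_range_sub, h_last]; ring

theorem aseq_eq_sum_aperyTerm_sq (n : ℕ) : aseq n = ∑ k ∈ range (n + 1), aperyTerm n k ^ 2 := by
  simp only [aseq, aperyTerm, mul_pow]

theorem bseq_eq_sum_aperyTerm_sq_mul_aperyApprox (n : ℕ) :
    bseq n = ∑ k ∈ range (n + 1), aperyTerm n k ^ 2 * aperyApprox n k := by
  simp only [aperyApprox, mul_add, sum_add_distrib, ← sum_mul, ← aseq_eq_sum_aperyTerm_sq, bseq]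
  congr 1
  rw [range_eq_Ico, sum_eq_sum_Ico_succ_bot n.add_one_pos, zero_add, Ico_add_one_right_eq_Icc,
    Icc_eq_empty_of_lt zero_lt_one, sum_empty, mul_zero, zero_add]
  refine sum_congr rfl fun k _ ↦ ?_
  rw [mul_sum]
  refine sum_congr rfl fun m _ ↦ ?_
  unfold aperyTerm
  ring

theorem aperyOp_aseq (n : ℕ) : aperyOp aseq n = 0 := by
  rw [funext aseq_eq_sum_aperyTerm_sq]
  refine aperyOp_eq_zero_of_telescoping (v := aperyCertA (n + 1)) (fun m k hmk ↦ ?_) ?_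
    (fun k _ ↦ aperyOp_aperyTerm_sq n k) ?_
  · simp [aperyTerm_eq_zero_of_lt hmk]
  · simp only [aperyOp, aperyCertA, aperyTerm_zero_right]
    push_cast
    ring
  · simp [aperyCertA, aperyTerm_eq_zero_of_lt]

theorem aperyOp_bseq (n : ℕ) : aperyOp bseq n = 0 := by
  rw [funext bseq_eq_sum_aperyTerm_sq_mul_aperyApprox]
  refine aperyOp_eq_zero_of_telescoping (v := aperyCertB (n + 1)) (fun m k hmk ↦ ?_) ?_
    (fun k hk ↦ aperyOp_aperyTerm_sq_mul_aperyApprox hk) ?_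
  · simp [aperyTerm_eq_zero_of_lt hmk]
  · simp only [aperyOp, aperyCertB, aperyTerm_zero_right, aperyApprox_zero_right,
      zseq_succ]
    push_cast
    field_simp
    ring
  · simp [aperyCertB, aperyTerm_eq_zero_of_lt]

theorem casoratian_of_aperyOp_eq_zero {u v : ℕ → ℝ} (hu : ∀ n, aperyOp u n = 0)
    (hv : ∀ n, aperyOp v n = 0) (n : ℕ) :
    ((n : ℝ) + 1) ^ 3 * (u n * v (n + 1) - u (n + 1) * v n) = u 0 * v 1 - u 1 * v 0 := by
  induction n with
  | zero => simp
  | succ n ih =>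
    rw [← ih]
    have hu' := hu n
    have hv' := hv n
    unfold aperyOp at hu' hv'
    push_cast
    linear_combination u (n + 1) * hv' - v (n + 1) * hu'

theorem mul_le_succ_of_aperyOp_eq_zero {u : ℕ → ℝ} (hu : ∀ n, aperyOp u n = 0)
    (h_nonneg : ∀ n, 0 ≤ u n) (h_mono : Monotone u) {n : ℕ} (hn : 47 ≤ n) :
    32 * u n ≤ u (n + 1) := by
  obtain ⟨n, rfl⟩ : ∃ j, n = j + 47 := ⟨n - 47, by lia⟩
  have hrec := hu (n + 46)
  have hmono : u (n + 46) ≤ u (n + 47) := h_mono (by lia)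
  unfold aperyOp at hrec
  push_cast at hrec
  refine le_of_mul_le_mul_left (a := ((n : ℝ) + 46 + 2) ^ 3) ?_ (by positivity)
  have h₁ := mul_le_mul_of_nonneg_left hmono (by positivity : (0 : ℝ) ≤ ((n : ℝ) + 46 + 1) ^ 3)
  -- The polynomial is `34 x³ + 51 x² + 27 x + 5 - x³ - 32 (x + 1)³` at `x = n + 47`.
  have h₂ : 0 ≤ ((n : ℝ) ^ 3 + 96 * n ^ 2 + 2328 * n + 1148) * u (n + 47) :=
    mul_nonneg (by positivity) (h_nonneg _)
  linear_combination h₁ + h₂ - hrec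

end Recurrence

section LinearForms

open Filter Finset Topology

theorem one_le_aseq (n : ℕ) : 1 ≤ aseq n := by
  rw [aseq_eq_sum_aperyTerm_sq]
  calc 1 = aperyTerm n 0 ^ 2 := by simp [aperyTerm_zero_right]
    _ ≤ ∑ k ∈ range (n + 1), aperyTerm n k ^ 2 :=
      single_le_sum (f := fun k ↦ aperyTerm n k ^ 2) (fun _ _ ↦ sq_nonneg _) (by simp)

theorem aseq_pos (n : ℕ) : 0 < aseq n := zero_lt_one.trans_le (one_le_aseq n)

theorem aseq_monotone : Monotone aseq := by
  refine monotone_nat_of_le_succ fun n ↦ ?_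
  refine (sum_le_sum fun k _ ↦ ?_).trans (sum_le_sum_of_subset_of_nonneg
    (range_mono (n + 1).le_succ) fun k _ _ ↦ by positivity)
  have h₁ : n.choose k ≤ (n + 1).choose k := Nat.choose_le_choose k n.le_succ
  have h₂ : (n + k).choose k ≤ (n + 1 + k).choose k := Nat.choose_le_choose k (by lia)
  gcongr

theorem pow_le_mul_aseq (n : ℕ) : (32 : ℝ) ^ n ≤ 32 ^ 47 * aseq n := by
  rcases le_total n 47 with hn | hn
  · calc (32 : ℝ) ^ n ≤ 32 ^ 47 := by gcongr; norm_num
      _ ≤ 32 ^ 47 * aseq n := le_mul_of_one_le_right (by norm_num) (one_le_aseq n)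
  · induction n, hn using Nat.le_induction with
    | base => exact le_mul_of_one_le_right (by norm_num) (one_le_aseq 47)
    | succ n hn ih =>
      have := mul_le_succ_of_aperyOp_eq_zero aperyOp_aseq (fun n ↦ (aseq_pos n).le)
        aseq_monotone hn
      rw [pow_succ]
      linarith

theorem bseq_div_aseq_succ_sub (n : ℕ) :
    bseq (n + 1) / aseq (n + 1) - bseq n / aseq n =
      6 / (aseq n * aseq (n + 1)) * (zseq (n + 1) - zseq n) := by
  have h_init : aseq 0 * bseq 1 - aseq 1 * bseq 0 = 6 := by
    norm_num [aseq, bseq, zseq, sum_range_succ]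
  have h := casoratian_of_aperyOp_eq_zero aperyOp_aseq aperyOp_bseq n
  rw [h_init] at h
  have h₀ := (aseq_pos n).ne'
  have h₁ := (aseq_pos (n + 1)).ne'
  rw [zseq_succ, ← h]
  field_simp
  ring

theorem bseq_div_aseq_monotone : Monotone fun n ↦ bseq n / aseq n := by
  refine monotone_nat_of_le_succ fun n ↦ sub_nonneg.1 ?_
  rw [bseq_div_aseq_succ_sub, zseq_succ, add_sub_cancel_left]
  have h₀ := aseq_pos n
  have h₁ := aseq_pos (n + 1)
  positivity

theorem bseq_div_aseq_add_sub_le (n j : ℕ) :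
    bseq (n + j) / aseq (n + j) - bseq n / aseq n ≤
      6 / aseq n ^ 2 * (zseq (n + j) - zseq n) := by
  induction j with
  | zero => simp
  | succ j ih =>
    have h_pos := aseq_pos n
    have h_pos' := aseq_pos (n + j)
    have h₀ : aseq n ≤ aseq (n + j) := aseq_monotone (by lia)
    have h₁ : aseq n ≤ aseq (n + j + 1) := aseq_monotone (by lia)
    have h_step : bseq (n + j + 1) / aseq (n + j + 1) - bseq (n + j) / aseq (n + j) ≤
        6 / aseq n ^ 2 * (zseq (n + j + 1) - zseq (n + j)) := by
      have hz : 0 ≤ zseq (n + j + 1) - zseq (n + j) := by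
        rw [zseq_succ, add_sub_cancel_left]
        positivity
      rw [bseq_div_aseq_succ_sub, sq]
      gcongr
    rw [← add_assoc]
    linarith

theorem hasSum_zeta3 : HasSum (fun m : ℕ ↦ 1 / ((m : ℝ) + 1) ^ 3) zeta3 := by
  have h := (summable_nat_add_iff 1).2 (Real.summable_one_div_nat_pow.2 (by norm_num : 1 < 3))
  push_cast at h
  exact h.hasSum

theorem zseq_eq_sum_range (n : ℕ) : zseq n = ∑ m ∈ range n, 1 / ((m : ℝ) + 1) ^ 3 := by
  rw [zseq, range_eq_Ico, ← Ico_add_one_right_eq_Icc, ← sum_Ico_add' _ 0 n 1]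
  simp only [Nat.cast_add, Nat.cast_one]

theorem zseq_tendsto : Tendsto zseq atTop (𝓝 zeta3) := by
  rw [funext zseq_eq_sum_range]
  exact hasSum_zeta3.tendsto_sum_nat

theorem zseq_le_zeta3 (n : ℕ) : zseq n ≤ zeta3 := by
  rw [zseq_eq_sum_range]
  exact sum_le_hasSum _ (fun m _ ↦ by positivity) hasSum_zeta3

theorem zseq_nonneg (n : ℕ) : 0 ≤ zseq n := by
  unfold zseq
  positivity

theorem abs_aperyApprox_sub_zseq_le {n k : ℕ} (h : k ≤ n) :
    |aperyApprox n k - zseq n| ≤ zeta3 / (n + 1) := by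
  have h_term : ∀ m ∈ Icc 1 k, |(-1 : ℝ) ^ (m + 1) / (2 * (m : ℝ) ^ 3 * aperyTerm n m)| ≤
      1 / (m : ℝ) ^ 3 / (n + 1) := fun m hm ↦ by
    obtain ⟨hm₁, hmk⟩ := mem_Icc.1 hm
    have hm_pos : (0 : ℝ) < m := by exact_mod_cast hm₁
    have h_le := add_one_le_aperyTerm hm₁ (hmk.trans h)
    have h_pos := aperyTerm_pos (hmk.trans h)
    rw [abs_div, abs_pow, abs_neg, abs_one, one_pow, abs_of_pos (by positivity), div_div]
    gcongr
    linarith [pow_pos hm_pos 3]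
  calc |aperyApprox n k - zseq n|
      ≤ ∑ m ∈ Icc 1 k, |(-1 : ℝ) ^ (m + 1) / (2 * (m : ℝ) ^ 3 * aperyTerm n m)| := by
        rw [aperyApprox, add_sub_cancel_left]
        exact abs_sum_le_sum_abs _ _
    _ ≤ ∑ m ∈ Icc 1 k, 1 / (m : ℝ) ^ 3 / (n + 1) := sum_le_sum h_term
    _ = zseq k / (n + 1) := by rw [zseq, sum_div]
    _ ≤ zeta3 / (n + 1) := by gcongr; exact zseq_le_zeta3 k

theorem abs_bseq_div_aseq_sub_zseq_le (n : ℕ) :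
    |bseq n / aseq n - zseq n| ≤ zeta3 / (n + 1) := by
  have h_pos := aseq_pos n
  have h_avg : bseq n - aseq n * zseq n =
      ∑ k ∈ range (n + 1), aperyTerm n k ^ 2 * (aperyApprox n k - zseq n) := by
    simp only [mul_sub, sum_sub_distrib, ← sum_mul, ← aseq_eq_sum_aperyTerm_sq,
      ← bseq_eq_sum_aperyTerm_sq_mul_aperyApprox]
  rw [div_sub' h_pos.ne', abs_div, abs_of_pos h_pos, div_le_iff₀ h_pos, h_avg]
  calc |∑ k ∈ range (n + 1), aperyTerm n k ^ 2 * (aperyApprox n k - zseq n)|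
      ≤ ∑ k ∈ range (n + 1), |aperyTerm n k ^ 2 * (aperyApprox n k - zseq n)| :=
        abs_sum_le_sum_abs _ _
    _ ≤ ∑ k ∈ range (n + 1), aperyTerm n k ^ 2 * (zeta3 / (n + 1)) := by
        refine sum_le_sum fun k hk ↦ ?_
        rw [abs_mul, abs_of_nonneg (sq_nonneg _)]
        gcongr
        exact abs_aperyApprox_sub_zseq_le (mem_range_succ_iff.1 hk)
    _ = zeta3 / (n + 1) * aseq n := by rw [← sum_mul, ← aseq_eq_sum_aperyTerm_sq, mul_comm]

theorem bseq_div_aseq_tendsto : Tendsto (fun n ↦ bseq n / aseq n) atTop (𝓝 zeta3) := by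
  have h_zero : Tendsto (fun n : ℕ ↦ zeta3 / ((n : ℝ) + 1)) atTop (𝓝 0) :=
    tendsto_const_nhds.div_atTop (tendsto_natCast_atTop_atTop.atTop_add tendsto_const_nhds)
  simpa using (squeeze_zero_norm abs_bseq_div_aseq_sub_zseq_le h_zero).add zseq_tendsto

theorem aseq_mul_zeta3_sub_bseq_nonneg (n : ℕ) : 0 ≤ aseq n * zeta3 - bseq n := by
  have h := bseq_div_aseq_monotone.ge_of_tendsto bseq_div_aseq_tendsto n
  rw [div_le_iff₀ (aseq_pos n)] at h
  linarith

theorem aseq_mul_zeta3_sub_bseq_le (n : ℕ) : aseq n * zeta3 - bseq n ≤ 6 * zeta3 / aseq n := by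
  have h_pos := aseq_pos n
  have h_shift : Tendsto (fun j ↦ n + j) atTop atTop :=
    tendsto_atTop_mono (fun j ↦ Nat.le_add_left j n) tendsto_id
  have h_le : zeta3 - bseq n / aseq n ≤ 6 / aseq n ^ 2 * (zeta3 - zseq n) := by
    refine le_of_tendsto_of_tendsto' (b := atTop) ?_ ?_ (bseq_div_aseq_add_sub_le n)
    · exact (bseq_div_aseq_tendsto.comp h_shift).sub_const _
    · exact ((zseq_tendsto.comp h_shift).sub_const _).const_mul _
  calc aseq n * zeta3 - bseq n = aseq n * (zeta3 - bseq n / aseq n) := by field_simp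
    _ ≤ aseq n * (6 / aseq n ^ 2 * (zeta3 - zseq n)) := by gcongr
    _ ≤ aseq n * (6 / aseq n ^ 2 * zeta3) := by gcongr; exact sub_le_self _ (zseq_nonneg n)
    _ = 6 * zeta3 / aseq n := by field_simp

theorem zeta3_nonneg : 0 ≤ zeta3 := (zseq_nonneg 0).trans (zseq_le_zeta3 0)

theorem aseq_mul_zeta3_sub_bseq_le_div_pow (n : ℕ) :
    aseq n * zeta3 - bseq n ≤ 6 * zeta3 * 32 ^ 47 / 32 ^ n := by
  calc aseq n * zeta3 - bseq n ≤ 6 * zeta3 / aseq n := aseq_mul_zeta3_sub_bseq_le n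
    _ ≤ 6 * zeta3 * 32 ^ 47 / 32 ^ n := by
      have h := mul_le_mul_of_nonneg_left (pow_le_mul_aseq n)
        (mul_nonneg (by norm_num : (0 : ℝ) ≤ 6) zeta3_nonneg)
      rw [div_le_div_iff₀ (aseq_pos n) (by positivity)]
      linarith

end LinearForms

/-- The sequence `ℓ_n³ (a n ζ(3) - b n)` tends to `0`. -/
theorem lcm_cubed_delta_tendsto_zero :
    Filter.Tendsto (fun n : ℕ => (lcmUpTo n : ℝ) ^ 3 * (aseq n * zeta3 - bseq n))
      Filter.atTop (nhds 0) := by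
  obtain ⟨D, hD, hlcm⟩ := exists_lcmUpTo_le
  have h_lim : Filter.Tendsto (fun n : ℕ ↦ D ^ 3 * (6 * zeta3 * 32 ^ 47) * ((22 / 7) ^ 3 / 32) ^ n)
      Filter.atTop (nhds 0) := by
    simpa using (tendsto_pow_atTop_nhds_zero_of_lt_one (r := ((22 / 7) ^ 3 / 32 : ℝ))
      (by norm_num) (by norm_num)).const_mul (D ^ 3 * (6 * zeta3 * 32 ^ 47))
  refine squeeze_zero
    (fun n ↦ mul_nonneg (by positivity) (aseq_mul_zeta3_sub_bseq_nonneg n)) (fun n ↦ ?_) h_lim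
  calc (lcmUpTo n : ℝ) ^ 3 * (aseq n * zeta3 - bseq n)
      ≤ (D * (22 / 7) ^ n) ^ 3 * (6 * zeta3 * 32 ^ 47 / 32 ^ n) := by
        gcongr
        · exact aseq_mul_zeta3_sub_bseq_nonneg n
        · exact hlcm n
        · exact aseq_mul_zeta3_sub_bseq_le_div_pow n
    _ = D ^ 3 * (6 * zeta3 * 32 ^ 47) * ((22 / 7) ^ 3 / 32) ^ n := by
        rw [mul_pow, pow_right_comm, div_pow ((22 / 7 : ℝ) ^ 3)]
        ring
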